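/- arXiv:2103.16186 — 2 statements merged into one kernel-verified Lean document; each statement's English description precedes it below -/
import Mathlib

section
/- Let d ≥ 3 be an integer and let T be a nonempty subset of ℕ_0^d with dim(T) = 2. Then the 2-completion of T satisfies E_2^∞(T) = Λ(T) ∩ ℕ_0^d. -/
open MeasureTheory
open scoped Classical ENNReal

noncomputable section

/-- The `d`-dimensional torus, modelled as `d` copies of `ℝ/ℤ`,
whose product `volume` measure is the normalized Haar measure. -/
abbrev Torus (d : ℕ) := Fin d → AddCircle (1 : ℝ)

/-- The character `z ↦ z^α` on the torus. -/
def torusChar {d : ℕ} (α : Fin d → ℤ) (x : Torus d) : ℂ :=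
  ∏ j, fourier (α j) (x j)

/-- The trigonometric polynomial with frequencies in `F` and coefficients `a`. -/
def trigPoly {d : ℕ} (F : Finset (Fin d → ℤ)) (a : (Fin d → ℤ) → ℂ) (x : Torus d) : ℂ :=
  ∑ α ∈ F, a α * torusChar α x

/-- The set `ℕ₀^d` of multi-indices with nonnegative entries. -/
def NN (d : ℕ) : Set (Fin d → ℤ) := {α | ∀ j, 0 ≤ α j}

/-- `Λ` is a coset in `ℤ^d`, i.e. a translate of a subgroup. -/
def IsCoset {d : ℕ} (Λ : Set (Fin d → ℤ)) : Prop :=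
  ∃ (x : Fin d → ℤ) (H : AddSubgroup (Fin d → ℤ)),
    Λ = (x + ·) '' (H : Set (Fin d → ℤ))

/-- `Λ` is a contractive projection set for `L^p(𝕋^d)`:
the projection onto frequencies in `Λ` is contractive on trigonometric polynomials. -/
def IsContractiveLp (d : ℕ) (p : ℝ≥0∞) (Λ : Set (Fin d → ℤ)) : Prop :=
  ∀ (F : Finset (Fin d → ℤ)) (a : (Fin d → ℤ) → ℂ),
    eLpNorm (trigPoly (F.filter (· ∈ Λ)) a) p volume ≤ eLpNorm (trigPoly F a) p volume

/-- `Γ` is a contractive projection set for `H^p(𝕋^d)`: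
the projection onto frequencies in `Γ` is contractive on analytic polynomials. -/
def IsContractiveHp (d : ℕ) (p : ℝ≥0∞) (Γ : Set (Fin d → ℤ)) : Prop :=
  ∀ F : Finset (Fin d → ℤ), ↑F ⊆ NN d → ∀ a : (Fin d → ℤ) → ℂ,
    eLpNorm (trigPoly (F.filter (· ∈ Γ)) a) p volume ≤ eLpNorm (trigPoly F a) p volume

/-- `Γ` has dimension `k`: the subgroup generated by the differences `γ - γ₀` has rank `k`. -/
def HasDim {d : ℕ} (Γ : Set (Fin d → ℤ)) (k : ℕ) : Prop :=
  ∀ γ₀ ∈ Γ, Module.finrank ℤ (Submodule.span ℤ ((· - γ₀) '' Γ)) = k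

/-- `H^p(𝕋^d)` enjoys the contractive restriction property of dimension `k`:
every `k`-dimensional contractive projection set for `H^p(𝕋^d)` is the restriction
of a coset in `ℤ^d` to `ℕ₀^d`. -/
def ContractiveRestrictionProperty (d : ℕ) (p : ℝ≥0∞) (k : ℕ) : Prop :=
  ∀ Γ : Set (Fin d → ℤ), Γ.Nonempty → Γ ⊆ NN d → HasDim Γ k → IsContractiveHp d p Γ →
    ∃ Λ : Set (Fin d → ℤ), IsCoset Λ ∧ Γ = Λ ∩ NN d

/-- The coset `Λ(Γ)` in `ℤ^d` generated by `Γ`. -/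
def cosetGen {d : ℕ} (Γ : Set (Fin d → ℤ)) : Set (Fin d → ℤ) :=
  ⋃ γ₀ ∈ Γ, (γ₀ + ·) '' (AddSubgroup.closure ((· - γ₀) '' Γ) : Set (Fin d → ℤ))

/-- The `n`-extension `E_n(Γ)`: all points of `Λ(Γ) ∩ ℕ₀^d` at distance at most `n` from `Γ`. -/
def Eext {d : ℕ} (n : ℕ) (Γ : Set (Fin d → ℤ)) : Set (Fin d → ℤ) :=
  {lam | lam ∈ cosetGen Γ ∩ NN d ∧ ∃ γ ∈ Γ, ∃ m : (Fin d → ℤ) →₀ ℤ,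
    (↑m.support : Set (Fin d → ℤ)) ⊆ Γ \ {γ} ∧
    lam = γ + ∑ α ∈ m.support, m α • (α - γ) ∧
    (∑ α ∈ m.support, max (m α) 0) ≤ (n : ℤ) ∧
    (∑ α ∈ m.support, max (-(m α)) 0) ≤ (n : ℤ)}

/-- Iterated `n`-extensions `E_n^k(Γ)`. -/
def EextIter {d : ℕ} (n : ℕ) : ℕ → Set (Fin d → ℤ) → Set (Fin d → ℤ)
  | 0, Γ => Eext n Γ
  | (k + 1), Γ => Eext n (EextIter n k Γ)

/-- The `n`-completion `E_n^∞(Γ)`. -/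
def EextInf {d : ℕ} (n : ℕ) (Γ : Set (Fin d → ℤ)) : Set (Fin d → ℤ) :=
  ⋃ k, EextIter n k Γ

/-!
Put a point of `T` at the origin. Inside the rank-two lattice generated by `T`, the completion `Γ`
contains every `a + b + g - c - e` with `a, b, g, c, e ∈ Γ` that lies in the convex set
`P` cut out by the positive cone, and the claim is `P ⊆ Γ`.

Let `A, B, C` be a triangle in `Γ` of least nonzero area and `X ∈ Γ`. The barycentric coordinates of
`X` are ratios of areas, so each of them is zero or at least one in absolute value. Unless `X` is
a vertex, one of three moves (with the roles of `A, B, C` permuted) makes the coordinates smaller: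
replacing `A` by `B + C - A`, replacing `B` by `2 A - B`, or replacing `X` by `X + B + C - 2 A`. In
each case the new point is a convex combination of the old ones, hence lies in `P` and so in `Γ`. By
descent, `X` belongs to the affine lattice spanned by `A, B, C`. As `Γ` generates the whole lattice,
the triangle is unimodular. Then every point of `P` has integral coordinates, so the gap between
zero and one holds for all of `P`, and the same descent shows `P ⊆ Γ`.
-/

variable {M N : Type*} [AddCommGroup M] [AddCommGroup N]

/-! ### Barycentric coordinates and lattice areas -/

/-- The integers `x, y, z` are barycentric coordinates of `X` with respect to `A, B, C`, cleared of
their common denominator `m`. The triangle `A, B, C` may be degenerate. -/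
structure IsBarycentric (m : ℤ) (A B C X : M) (x y z : ℤ) : Prop where
  sum_eq : x + y + z = m
  smul_eq : m • X = x • A + y • B + z • C

namespace IsBarycentric

variable {m x y z : ℤ} {A B C X : M}

theorem rotate (h : IsBarycentric m A B C X x y z) : IsBarycentric m B C A X y z x where
  sum_eq := by linarith [h.sum_eq]
  smul_eq := by rw [h.smul_eq]; abel

theorem swap (h : IsBarycentric m A B C X x y z) : IsBarycentric m A C B X x z y where
  sum_eq := by linarith [h.sum_eq]
  smul_eq := by rw [h.smul_eq]; abel

theorem neg (h : IsBarycentric m A B C X x y z) : IsBarycentric (-m) A B C X (-x) (-y) (-z) where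
  sum_eq := by linarith [h.sum_eq]
  smul_eq := by simp only [neg_smul, h.smul_eq]; abel

theorem map_affine (h : IsBarycentric m A B C X x y z) (f : M →+ N) (v : N) :
    IsBarycentric m (v + f A) (v + f B) (v + f C) (v + f X) x y z where
  sum_eq := h.sum_eq
  smul_eq := by
    have key : m • f X = x • f A + y • f B + z • f C := by
      simpa only [map_add, map_zsmul] using congrArg f h.smul_eq
    linear_combination (norm := module) key - h.sum_eq • v

theorem eq_fst_of_zero_zero [Module.IsTorsionFree ℤ M] (hm : m ≠ 0)
    (h : IsBarycentric m A B C X x 0 0) :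
    X = A := by
  have hx : x = m := by linarith [h.sum_eq]
  exact smul_right_injective M hm (by simpa [hx] using h.smul_eq)

theorem reflect_edge (h : IsBarycentric m A B C X x y z) :
    IsBarycentric m (B + C - A) B C X (-x) (y + x) (z + x) where
  sum_eq := by linarith [h.sum_eq]
  smul_eq := by rw [h.smul_eq]; module

theorem reflect_vertex (h : IsBarycentric m A B C X x y z) :
    IsBarycentric m A (A + A - B) C X (x + 2 * y) (-y) z where
  sum_eq := by linarith [h.sum_eq]
  smul_eq := by rw [h.smul_eq]; module

theorem translate (h : IsBarycentric m A B C X x y z) :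
    IsBarycentric m A B C (X + B + C - A - A) (x - 2 * m) (y + m) (z + m) where
  sum_eq := by linarith [h.sum_eq]
  smul_eq := by linear_combination (norm := module) h.smul_eq

theorem reflect_edge_combination (h : IsBarycentric m A B C X x y z) :
    IsBarycentric (-x) X B C (B + C - A) m (-x - y) (-x - z) where
  sum_eq := by linarith [h.sum_eq]
  smul_eq := by linear_combination (norm := module) -h.smul_eq

theorem reflect_vertex_combination (h : IsBarycentric m A B C X x y z) :
    IsBarycentric (-y) X A C (A + A - B) m (z - y - m) (-z) where
  sum_eq := by linarith [h.sum_eq]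
  smul_eq := by linear_combination (norm := module) -h.smul_eq - h.sum_eq • A

theorem translate_combination (h : IsBarycentric m A B C X x y z) :
    IsBarycentric (-y) X C A (X + B + C - A - A) (-y - m) (z - y) (y - z + m) where
  sum_eq := by linarith [h.sum_eq]
  smul_eq := by linear_combination (norm := module) h.smul_eq + h.sum_eq • A

end IsBarycentric

section Area

variable (b : Module.Basis (Fin 2) ℤ M) {m x y z : ℤ} {A B C X : M}

/-- Twice the signed area of the triangle `A, B, C`, in units of the area of the basis `b`. -/
def doubledArea (A B C : M) : ℤ := b.det ![B - A, C - A]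

theorem doubledArea_eq_repr (A B C : M) :
    doubledArea b A B C = (b.repr B 0 - b.repr A 0) * (b.repr C 1 - b.repr A 1) -
      (b.repr C 0 - b.repr A 0) * (b.repr B 1 - b.repr A 1) := by
  simp [doubledArea, Module.Basis.det_apply, Matrix.det_fin_two, Module.Basis.toMatrix_apply]

theorem doubledArea_rotate (A B C : M) : doubledArea b B C A = doubledArea b A B C := by
  simp only [doubledArea_eq_repr]; ring

theorem doubledArea_swap (A B C : M) : doubledArea b A C B = -doubledArea b A B C := by
  simp only [doubledArea_eq_repr]; ring

theorem doubledArea_reflect_edge (A B C : M) :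
    doubledArea b (B + C - A) B C = -doubledArea b A B C := by
  simp only [doubledArea_eq_repr, map_add, map_sub, Finsupp.add_apply, Finsupp.sub_apply]; ring

theorem doubledArea_reflect_vertex (A B C : M) :
    doubledArea b A (A + A - B) C = -doubledArea b A B C := by
  simp only [doubledArea_eq_repr, map_add, map_sub, Finsupp.add_apply, Finsupp.sub_apply]; ring

theorem IsBarycentric.mul_doubledArea (h : IsBarycentric m A B C X x y z) :
    m * doubledArea b X B C = x * doubledArea b A B C := by
  have hrepr (i : Fin 2) :
      m * b.repr X i = x * b.repr A i + y * b.repr B i + z * b.repr C i := by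
    simpa using congrArg (b.repr · i) h.smul_eq
  simp only [doubledArea_eq_repr]
  obtain rfl : z = m - x - y := by linarith [h.sum_eq]
  linear_combination (b.repr B 1 - b.repr C 1) * hrepr 0 + (b.repr C 0 - b.repr B 0) * hrepr 1

theorem isBarycentric_doubledArea (A B C X : M) :
    IsBarycentric (doubledArea b A B C) A B C X
      (doubledArea b X B C) (doubledArea b A X C) (doubledArea b A B X) where
  sum_eq := by simp only [doubledArea_eq_repr]; ring
  smul_eq := by
    refine b.repr.injective (Finsupp.ext fun i => ?_)
    simp only [doubledArea_eq_repr, map_add, map_zsmul, Finsupp.add_apply, Finsupp.smul_apply,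
      smul_eq_mul]
    fin_cases i <;> ring!

theorem exists_isBarycentric_natAbs (A B C X : M) :
    ∃ x y z, IsBarycentric (doubledArea b A B C).natAbs A B C X x y z := by
  have h := isBarycentric_doubledArea b A B C X
  rcases Int.natAbs_eq (doubledArea b A B C) with hA | hA
  · exact ⟨_, _, _, hA ▸ h⟩
  · exact ⟨_, _, _, (by omega : -doubledArea b A B C = (doubledArea b A B C).natAbs) ▸ h.neg⟩

theorem exists_doubledArea_ne_zero {Γ : Set M} (h0 : (0 : M) ∈ Γ)
    (hspan : Submodule.span ℤ Γ = ⊤) :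
    ∃ A ∈ Γ, ∃ B ∈ Γ, ∃ C ∈ Γ, doubledArea b A B C ≠ 0 := by
  by_contra! hdeg
  have coord_eq_zero (i : Fin 2) {p : M} (hp : p ∈ Γ) : b.coord i p = 0 := by
    have hform : b.coord 0 p • b.coord 1 - b.coord 1 p • b.coord 0 = 0 := by
      refine LinearMap.ext_on hspan fun q hq => ?_
      have := hdeg 0 h0 p hp q hq
      simp only [doubledArea_eq_repr, map_zero, Finsupp.zero_apply] at this
      simp only [LinearMap.sub_apply, LinearMap.smul_apply, Module.Basis.coord_apply, smul_eq_mul,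
        LinearMap.zero_apply]
      linarith
    fin_cases i
    · simpa using LinearMap.congr_fun hform (b 1)
    · simpa using LinearMap.congr_fun hform (b 0)
  have hcoord : b.coord 0 = 0 := LinearMap.ext_on hspan fun p hp => coord_eq_zero 0 hp
  simpa using LinearMap.congr_fun hcoord (b 0)

theorem exists_minimal_doubledArea {Γ : Set M} (h0 : (0 : M) ∈ Γ)
    (hspan : Submodule.span ℤ Γ = ⊤) :
    ∃ A ∈ Γ, ∃ B ∈ Γ, ∃ C ∈ Γ, doubledArea b A B C ≠ 0 ∧
      ∀ p ∈ Γ, ∀ q ∈ Γ, ∀ r ∈ Γ, doubledArea b p q r ≠ 0 →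
        (doubledArea b A B C).natAbs ≤ (doubledArea b p q r).natAbs := by
  obtain ⟨A, hA, B, hB, C, hC, hne⟩ := exists_doubledArea_ne_zero b h0 hspan
  obtain ⟨⟨A, B, C⟩, ⟨hA, hB, hC, hne⟩, hmin⟩ :=
    exists_minimalFor_of_wellFoundedLT
      (fun t : M × M × M => t.1 ∈ Γ ∧ t.2.1 ∈ Γ ∧ t.2.2 ∈ Γ ∧ doubledArea b t.1 t.2.1 t.2.2 ≠ 0)
      (fun t => (doubledArea b t.1 t.2.1 t.2.2).natAbs) ⟨(A, B, C), hA, hB, hC, hne⟩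
  refine ⟨A, hA, B, hB, C, hC, hne, fun p hp q hq r hr h => ?_⟩
  exact (le_total _ _).elim id (hmin (j := (p, q, r)) ⟨hp, hq, hr, h⟩)

theorem natAbs_doubledArea_eq_one (h : Submodule.span ℤ {B - A, C - A} = ⊤) :
    (doubledArea b A B C).natAbs = 1 := by
  have hrange : Submodule.span ℤ (Set.range ![B - A, C - A]) = ⊤ := by
    rwa [Matrix.range_cons_cons_empty]
  have hrank : Fintype.card (Fin 2) = Module.finrank ℤ M := (Module.finrank_eq_card_basis b).symm
  have := Module.Finite.of_basis b
  have hli := linearIndependent_of_top_le_span_of_card_eq_finrank hrange.ge hrank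
  exact Int.isUnit_iff_natAbs_eq.1 ((b.is_basis_iff_det).1 ⟨hli, hrange⟩)

end Area

/-! ### Convex and two-closed sets -/

/-- `P` contains every lattice point of the convex hull of three of its points. The weights are
integers over a common denominator `k`. -/
def LatticeConvex (P : Set M) : Prop :=
  ∀ ⦃A B C D : M⦄ ⦃k x y z : ℤ⦄, A ∈ P → B ∈ P → C ∈ P → IsBarycentric k A B C D x y z →
    0 < k → 0 ≤ x → 0 ≤ y → 0 ≤ z → D ∈ P

theorem LatticeConvex.preimage {P : Set N} (hP : LatticeConvex P) (f : M →+ N) (v : N) :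
    LatticeConvex ((fun s => v + f s) ⁻¹' P) :=
  fun _ _ _ _ _ _ _ _ hA hB hC h => hP hA hB hC (h.map_affine f v)

/-- `Γ` is a subset of `P` that is stable under `2`-extension inside `P`: writing `g` for the base
point, `a + b + g - c - e = g + (a - g) + (b - g) - (c - g) - (e - g)`. -/
structure IsTwoClosedIn (Γ P : Set M) : Prop where
  subset : Γ ⊆ P
  add_add_sub_sub_mem : ∀ ⦃a b g c e : M⦄, a ∈ Γ → b ∈ Γ → g ∈ Γ → c ∈ Γ → e ∈ Γ →
    a + b + g - c - e ∈ P → a + b + g - c - e ∈ Γ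

namespace IsTwoClosedIn

theorem add_sub_mem {Γ P : Set M} (h : IsTwoClosedIn Γ P) {a b c : M} (ha : a ∈ Γ) (hb : b ∈ Γ)
    (hc : c ∈ Γ) (hP : a + b - c ∈ P) : a + b - c ∈ Γ := by
  have key : a + b + c - c - c = a + b - c := by abel
  exact key ▸ h.add_add_sub_sub_mem ha hb hc hc hc (key ▸ hP)

theorem preimage {Γ P : Set N} (h : IsTwoClosedIn Γ P) (f : M →+ N) (v : N) :
    IsTwoClosedIn ((fun s => v + f s) ⁻¹' Γ) ((fun s => v + f s) ⁻¹' P) where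
  subset := Set.preimage_mono h.subset
  add_add_sub_sub_mem a b g c e ha hb hg hc he hP := by
    have key : v + f (a + b + g - c - e) =
        (v + f a) + (v + f b) + (v + f g) - (v + f c) - (v + f e) := by
      simp only [map_add, map_sub]; abel
    rw [Set.mem_preimage, key] at hP ⊢
    exact h.add_add_sub_sub_mem ha hb hg hc he hP

theorem inter_coset {Γ P : Set M} (h : IsTwoClosedIn Γ P) (H : AddSubgroup M) (v : M) :
    IsTwoClosedIn {s ∈ Γ | s - v ∈ H} P where
  subset := fun _ hs => h.subset hs.1
  add_add_sub_sub_mem a b g c e ha hb hg hc he hP := by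
    refine ⟨h.add_add_sub_sub_mem ha.1 hb.1 hg.1 hc.1 he.1 hP, ?_⟩
    have key : a + b + g - c - e - v = (a - v) + (b - v) + (g - v) - (c - v) - (e - v) := by abel
    rw [key]
    exact H.sub_mem (H.sub_mem (H.add_mem (H.add_mem ha.2 hb.2) hg.2) hc.2) he.2

end IsTwoClosedIn

/-! ### The descent -/

section Descent

/-- The hypotheses of the descent from `Q` to `Γ`: triangles move in `Γ`, the point being reached
moves in `Q`, and `m` is the area of the triangles, below which a triangle with two vertices in `Γ`
and one in `Q` is degenerate. -/
structure DescentSetting (b : Module.Basis (Fin 2) ℤ M) (Γ Q P : Set M) (m : ℕ) : Prop where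
  pos : 0 < m
  convex : LatticeConvex P
  closed : IsTwoClosedIn Γ P
  subset : Q ⊆ P
  translate_mem : ∀ ⦃X A B C : M⦄, X ∈ Q → A ∈ Γ → B ∈ Γ → C ∈ Γ →
    X + B + C - A - A ∈ P → X + B + C - A - A ∈ Q
  le_area : ∀ ⦃X B C : M⦄, X ∈ Q → B ∈ Γ → C ∈ Γ → doubledArea b X B C ≠ 0 →
    m ≤ (doubledArea b X B C).natAbs

/-- A state of the descent: a triangle `A, B, C` in `Γ` of doubled area `m` and a point `X` of `Q`
with its barycentric coordinates `x / m, y / m, z / m`. -/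
structure Position (b : Module.Basis (Fin 2) ℤ M) (Γ Q : Set M) (m : ℕ) (A B C X : M)
    (x y z : ℤ) : Prop where
  fst_mem : A ∈ Γ
  snd_mem : B ∈ Γ
  trd_mem : C ∈ Γ
  point_mem : X ∈ Q
  area_eq : (doubledArea b A B C).natAbs = m
  bary : IsBarycentric m A B C X x y z

/-- The induction hypothesis of the descent: the point of every position whose barycentric
coordinates have total size less than `n` lies in `Γ`. -/
def SettledBelow (b : Module.Basis (Fin 2) ℤ M) (Γ Q : Set M) (m n : ℕ) : Prop :=
  ∀ ⦃A B C X : M⦄ ⦃x y z : ℤ⦄, Position b Γ Q m A B C X x y z →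
    x.natAbs + y.natAbs + z.natAbs < n → X ∈ Γ

namespace Position

variable {b : Module.Basis (Fin 2) ℤ M} {Γ Q P : Set M} {m n : ℕ} {A B C X : M} {x y z : ℤ}

theorem rotate (h : Position b Γ Q m A B C X x y z) : Position b Γ Q m B C A X y z x where
  fst_mem := h.snd_mem
  snd_mem := h.trd_mem
  trd_mem := h.fst_mem
  point_mem := h.point_mem
  area_eq := by rw [doubledArea_rotate, h.area_eq]
  bary := h.bary.rotate

theorem swap (h : Position b Γ Q m A B C X x y z) : Position b Γ Q m A C B X x z y where
  fst_mem := h.fst_mem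
  snd_mem := h.trd_mem
  trd_mem := h.snd_mem
  point_mem := h.point_mem
  area_eq := by rw [doubledArea_swap, Int.natAbs_neg, h.area_eq]
  bary := h.bary.swap

theorem fst_trichotomy (S : DescentSetting b Γ Q P m) (h : Position b Γ Q m A B C X x y z) :
    x ≤ -m ∨ x = 0 ∨ m ≤ x := by
  have hx : (doubledArea b X B C).natAbs = x.natAbs := by
    have key := congrArg Int.natAbs (h.bary.mul_doubledArea b)
    rw [Int.natAbs_mul, Int.natAbs_mul, h.area_eq, Int.natAbs_natCast, mul_comm] at key
    exact Nat.eq_of_mul_eq_mul_right S.pos key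
  have := S.le_area h.point_mem h.snd_mem h.trd_mem
  omega

theorem mem_of_le_snd_of_le_trd (S : DescentSetting b Γ Q P m)
    (h : Position b Γ Q m A B C X x y z) (ih : SettledBelow b Γ Q m n)
    (hn : x.natAbs + y.natAbs + z.natAbs ≤ n) (hy : m ≤ y) (hz : m ≤ z) : X ∈ Γ := by
  have hm := S.pos
  have hsum := h.bary.sum_eq
  have hP : B + C - A ∈ P :=
    S.convex (S.subset h.point_mem) (S.closed.subset h.snd_mem) (S.closed.subset h.trd_mem)
      h.bary.reflect_edge_combination (by omega) (by omega) (by omega) (by omega)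
  have hpos : Position b Γ Q m (B + C - A) B C X (-x) (y + x) (z + x) :=
    { h with
      fst_mem := S.closed.add_sub_mem h.snd_mem h.trd_mem h.fst_mem hP
      area_eq := by rw [doubledArea_reflect_edge, Int.natAbs_neg, h.area_eq]
      bary := h.bary.reflect_edge }
  exact ih hpos (by omega)

theorem mem_of_snd_le_trd_sub (S : DescentSetting b Γ Q P m)
    (h : Position b Γ Q m A B C X x y z) (ih : SettledBelow b Γ Q m n)
    (hn : x.natAbs + y.natAbs + z.natAbs ≤ n) (hz : z ≤ 0) (hyz : y ≤ z - m) : X ∈ Γ := by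
  have hm := S.pos
  have hsum := h.bary.sum_eq
  have hP : A + A - B ∈ P :=
    S.convex (S.subset h.point_mem) (S.closed.subset h.fst_mem) (S.closed.subset h.trd_mem)
      h.bary.reflect_vertex_combination (by omega) (by omega) (by omega) (by omega)
  have hpos : Position b Γ Q m A (A + A - B) C X (x + 2 * y) (-y) z :=
    { h with
      snd_mem := S.closed.add_sub_mem h.fst_mem h.fst_mem h.snd_mem hP
      area_eq := by rw [doubledArea_reflect_vertex, Int.natAbs_neg, h.area_eq]
      bary := h.bary.reflect_vertex }
  exact ih hpos (by omega)

theorem mem_of_trd_sub_le_snd (S : DescentSetting b Γ Q P m)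
    (h : Position b Γ Q m A B C X x y z) (ih : SettledBelow b Γ Q m n)
    (hn : x.natAbs + y.natAbs + z.natAbs ≤ n) (hz : z ≤ -m) (hyz : y ≤ z) (hzy : z - m ≤ y) :
    X ∈ Γ := by
  have hm := S.pos
  have hsum := h.bary.sum_eq
  have hP : X + B + C - A - A ∈ P :=
    S.convex (S.subset h.point_mem) (S.closed.subset h.trd_mem) (S.closed.subset h.fst_mem)
      h.bary.translate_combination (by omega) (by omega) (by omega) (by omega)
  have hpos : Position b Γ Q m A B C (X + B + C - A - A) (x - 2 * m) (y + m) (z + m) :=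
    { h with
      point_mem := S.translate_mem h.point_mem h.fst_mem h.snd_mem h.trd_mem hP
      bary := h.bary.translate }
  have hback : A + A + (X + B + C - A - A) - B - C = X := by abel
  exact hback ▸ S.closed.add_add_sub_sub_mem h.fst_mem h.fst_mem (ih hpos (by omega)) h.snd_mem
    h.trd_mem (hback.symm ▸ S.subset h.point_mem)

theorem mem_of_snd_nonpos_of_trd_nonpos (S : DescentSetting b Γ Q P m)
    (h : Position b Γ Q m A B C X x y z) (ih : SettledBelow b Γ Q m n)
    (hn : x.natAbs + y.natAbs + z.natAbs ≤ n) (hy : y ≤ 0) (hz : z ≤ 0) : X ∈ Γ := by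
  have hm := S.pos
  wlog hyz : y ≤ z generalizing B C y z
  · exact this h.swap (by omega) hz hy (by omega)
  rcases hy.eq_or_lt with rfl | hy_neg
  · obtain rfl : z = 0 := by omega
    have : Module.Free ℤ M := .of_basis b
    rw [h.bary.eq_fst_of_zero_zero (by omega)]
    exact h.fst_mem
  · have hy_gap := h.rotate.fst_trichotomy S
    have hz_gap := h.rotate.rotate.fst_trichotomy S
    by_cases hfar : y ≤ z - m
    · exact h.mem_of_snd_le_trd_sub S ih hn hz hfar
    · exact h.mem_of_trd_sub_le_snd S ih hn (by omega) hyz (by omega)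

end Position

namespace DescentSetting

variable {b : Module.Basis (Fin 2) ℤ M} {Γ Q P : Set M} {m : ℕ}

theorem settledBelow (S : DescentSetting b Γ Q P m) (n : ℕ) : SettledBelow b Γ Q m n := by
  induction n with
  | zero => exact fun _ _ _ _ _ _ _ _ hn => absurd hn (Nat.not_lt_zero _)
  | succ n ih =>
    intro A B C X x y z h hn
    have hx := h.fst_trichotomy S
    have hy := h.rotate.fst_trichotomy S
    have hz := h.rotate.rotate.fst_trichotomy S
    have hsigns : (m ≤ y ∧ m ≤ z) ∨ (m ≤ z ∧ m ≤ x) ∨ (m ≤ x ∧ m ≤ y) ∨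
        (y ≤ 0 ∧ z ≤ 0) ∨ (z ≤ 0 ∧ x ≤ 0) ∨ (x ≤ 0 ∧ y ≤ 0) := by omega
    rcases hsigns with hs | hs | hs | hs | hs | hs
    · exact h.mem_of_le_snd_of_le_trd S ih (by omega) hs.1 hs.2
    · exact h.rotate.mem_of_le_snd_of_le_trd S ih (by omega) hs.1 hs.2
    · exact h.rotate.rotate.mem_of_le_snd_of_le_trd S ih (by omega) hs.1 hs.2
    · exact h.mem_of_snd_nonpos_of_trd_nonpos S ih (by omega) hs.1 hs.2
    · exact h.rotate.mem_of_snd_nonpos_of_trd_nonpos S ih (by omega) hs.1 hs.2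
    · exact h.rotate.rotate.mem_of_snd_nonpos_of_trd_nonpos S ih (by omega) hs.1 hs.2

theorem subset_of_natAbs_doubledArea_eq (S : DescentSetting b Γ Q P m) {A B C : M} (hA : A ∈ Γ)
    (hB : B ∈ Γ) (hC : C ∈ Γ) (harea : (doubledArea b A B C).natAbs = m) : Q ⊆ Γ := by
  intro X hX
  obtain ⟨x, y, z, hbary⟩ := exists_isBarycentric_natAbs b A B C X
  exact S.settledBelow _ ⟨hA, hB, hC, hX, harea, harea ▸ hbary⟩ (Nat.lt_succ_self _)

end DescentSetting

namespace IsTwoClosedIn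

variable {Γ P : Set M}

theorem sub_mem_span_of_minimal (b : Module.Basis (Fin 2) ℤ M) {A B C : M}
    (hΓ : IsTwoClosedIn Γ P) (hP : LatticeConvex P) (hA : A ∈ Γ) (hB : B ∈ Γ)
    (hC : C ∈ Γ) (hne : doubledArea b A B C ≠ 0)
    (hmin : ∀ p ∈ Γ, ∀ q ∈ Γ, ∀ r ∈ Γ, doubledArea b p q r ≠ 0 →
      (doubledArea b A B C).natAbs ≤ (doubledArea b p q r).natAbs) {X : M} (hX : X ∈ Γ) :
    X - A ∈ Submodule.span ℤ {B - A, C - A} := by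
  let H := (Submodule.span ℤ {B - A, C - A}).toAddSubgroup
  have S : DescentSetting b {s ∈ Γ | s - A ∈ H} Γ P (doubledArea b A B C).natAbs :=
    { pos := Int.natAbs_pos.2 hne
      convex := hP
      closed := hΓ.inter_coset H A
      subset := hΓ.subset
      translate_mem := fun X A B C hX hA hB hC h =>
        hΓ.add_add_sub_sub_mem hX hB.1 hC.1 hA.1 hA.1 h
      le_area := fun X B C hX hB hC h => hmin X hX B hB.1 C hC.1 h }
  have hA' : A - A ∈ H := by rw [sub_self]; exact H.zero_mem
  have hB' : B - A ∈ H := Submodule.subset_span (Set.mem_insert _ _)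
  have hC' : C - A ∈ H := Submodule.subset_span (Set.mem_insert_of_mem _ rfl)
  exact (S.subset_of_natAbs_doubledArea_eq ⟨hA, hA'⟩ ⟨hB, hB'⟩ ⟨hC, hC'⟩ rfl hX).2

theorem superset_of_span_eq_top [Module.Free ℤ M] [Module.Finite ℤ M]
    (hrank : Module.finrank ℤ M = 2) (hΓ : IsTwoClosedIn Γ P) (hP : LatticeConvex P)
    (h0 : (0 : M) ∈ Γ) (hspan : Submodule.span ℤ Γ = ⊤) : P ⊆ Γ := by
  let b := Module.finBasisOfFinrankEq ℤ M hrank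
  obtain ⟨A, hA, B, hB, C, hC, hne, hmin⟩ := exists_minimal_doubledArea b h0 hspan
  have hsub {X : M} (hX : X ∈ Γ) : X - A ∈ Submodule.span ℤ {B - A, C - A} :=
    hΓ.sub_mem_span_of_minimal b hP hA hB hC hne hmin hX
  have htop : Submodule.span ℤ {B - A, C - A} = ⊤ := by
    rw [eq_top_iff, ← hspan, Submodule.span_le]
    intro X hX
    simpa using Submodule.sub_mem _ (hsub hX) (hsub h0)
  have S : DescentSetting b Γ P P 1 :=
    { pos := one_pos
      convex := hP
      closed := hΓ
      subset := subset_rfl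
      translate_mem := fun _ _ _ _ _ _ _ _ h => h
      le_area := fun _ _ _ _ _ _ h => Int.natAbs_pos.2 h }
  exact S.subset_of_natAbs_doubledArea_eq hA hB hC (natAbs_doubledArea_eq_one b htop)

end IsTwoClosedIn

end Descent

/-! ### Extensions -/

theorem sum_count_smul_sub [DecidableEq M] {F : Finset M} {γ : M} {s : Multiset M}
    (hs : s.toFinset ⊆ F) :
    ∑ α ∈ F.erase γ, (s.count α : ℤ) • (α - γ) = (s.map (· - γ)).sum := by
  rw [Finset.sum_erase _ (by simp), Finset.sum_multiset_map_count]
  simp only [natCast_zsmul]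
  refine (Finset.sum_subset hs fun α _ hα => ?_).symm
  rw [Multiset.count_eq_zero.2 (by simpa using hα), zero_smul]

theorem sum_count_le_card {α : Type*} [DecidableEq α] (F : Finset α) (s : Multiset α) :
    ∑ a ∈ F, s.count a ≤ s.card := by
  calc ∑ a ∈ F, s.count a ≤ ∑ a ∈ F ∪ s.toFinset, s.count a :=
        Finset.sum_le_sum_of_subset Finset.subset_union_left
    _ = s.card := Multiset.sum_count_eq_card fun a ha =>
        Finset.mem_union_right _ (Multiset.mem_toFinset.2 ha)

variable {d : ℕ} {Γ T : Set (Fin d → ℤ)}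

theorem mem_cosetGen_iff {γ x : Fin d → ℤ} (hγ : γ ∈ Γ) :
    x ∈ cosetGen Γ ↔ x - γ ∈ Submodule.span ℤ ((· - γ) '' Γ) := by
  have key (γ₀ : Fin d → ℤ) (hγ₀ : γ₀ ∈ Γ) : Submodule.span ℤ ((· - γ₀) '' Γ) ≤
      Submodule.span ℤ ((· - γ) '' Γ) := by
    rw [Submodule.span_le]
    rintro _ ⟨α, hα, rfl⟩
    simpa using Submodule.sub_mem _ (Submodule.subset_span (Set.mem_image_of_mem (· - γ) hα))
      (Submodule.subset_span (Set.mem_image_of_mem (· - γ) hγ₀))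
  simp only [cosetGen, Set.mem_iUnion, Set.mem_image, SetLike.mem_coe, exists_prop]
  constructor
  · rintro ⟨γ₀, hγ₀, h, hh, rfl⟩
    rw [← Submodule.span_int_eq_addSubgroupClosure, Submodule.mem_toAddSubgroup] at hh
    rw [add_sub_right_comm]
    exact add_mem (Submodule.subset_span (Set.mem_image_of_mem _ hγ₀)) (key γ₀ hγ₀ hh)
  · intro h
    rw [← Submodule.mem_toAddSubgroup, Submodule.span_int_eq_addSubgroupClosure] at h
    exact ⟨γ, hγ, x - γ, h, add_sub_cancel γ x⟩

theorem cosetGen_subset_cosetGen (h : Γ ⊆ cosetGen T) : cosetGen Γ ⊆ cosetGen T := by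
  intro x hx
  obtain ⟨γ, hγ, -⟩ := Set.mem_iUnion₂.1 hx
  obtain ⟨τ, hτ, -⟩ := Set.mem_iUnion₂.1 (h hγ)
  rw [mem_cosetGen_iff hγ] at hx
  rw [mem_cosetGen_iff hτ]
  have hle : Submodule.span ℤ ((· - γ) '' Γ) ≤ Submodule.span ℤ ((· - τ) '' T) := by
    rw [Submodule.span_le]
    rintro _ ⟨α, hα, rfl⟩
    simpa using sub_mem ((mem_cosetGen_iff hτ).1 (h hα)) ((mem_cosetGen_iff hτ).1 (h hγ))
  simpa using add_mem (hle hx) ((mem_cosetGen_iff hτ).1 (h hγ))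

theorem add_sum_sub_sum_mem_cosetGen {γ : Fin d → ℤ} (hγ : γ ∈ Γ) {s t : Multiset (Fin d → ℤ)}
    (hs : ∀ α ∈ s, α ∈ Γ) (ht : ∀ α ∈ t, α ∈ Γ) :
    γ + (s.map (· - γ)).sum - (t.map (· - γ)).sum ∈ cosetGen Γ := by
  have sum_mem {u : Multiset (Fin d → ℤ)} (hu : ∀ α ∈ u, α ∈ Γ) :
      (u.map (· - γ)).sum ∈ Submodule.span ℤ ((· - γ) '' Γ) := by
    refine multiset_sum_mem _ fun v hv => ?_
    obtain ⟨α, hα, rfl⟩ := Multiset.mem_map.1 hv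
    exact Submodule.subset_span (Set.mem_image_of_mem _ (hu α hα))
  rw [mem_cosetGen_iff hγ, add_sub_assoc, add_sub_cancel_left]
  exact sub_mem (sum_mem hs) (sum_mem ht)

theorem add_sum_sub_sum_mem_Eext {n : ℕ} {γ : Fin d → ℤ} (hγ : γ ∈ Γ)
    {s t : Multiset (Fin d → ℤ)} (hs : ∀ α ∈ s, α ∈ Γ) (ht : ∀ α ∈ t, α ∈ Γ)
    (hsn : s.card ≤ n) (htn : t.card ≤ n)
    (hN : γ + (s.map (· - γ)).sum - (t.map (· - γ)).sum ∈ NN d) :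
    γ + (s.map (· - γ)).sum - (t.map (· - γ)).sum ∈ Eext n Γ := by
  let F := s.toFinset ∪ t.toFinset
  have hF {α} (hα : α ∈ F) : α ∈ Γ :=
    (Finset.mem_union.1 hα).elim (hs α <| Multiset.mem_toFinset.1 ·)
      (ht α <| Multiset.mem_toFinset.1 ·)
  let coeff (α : Fin d → ℤ) : ℤ := s.count α - t.count α
  let m : (Fin d → ℤ) →₀ ℤ := Finsupp.indicator (F.erase γ) fun α _ => coeff α
  have hm {α} (hα : α ∈ F.erase γ) : m α = coeff α := Finsupp.indicator_of_mem hα _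
  have hsupp : m.support ⊆ F.erase γ := Finsupp.support_indicator_subset _ _
  refine ⟨⟨add_sum_sub_sum_mem_cosetGen hγ hs ht, hN⟩, γ, hγ, m, ?_, ?_, ?_, ?_⟩
  · intro α hα
    obtain ⟨hne, hα⟩ := Finset.mem_erase.1 (hsupp hα)
    exact ⟨hF hα, hne⟩
  · calc γ + (s.map (· - γ)).sum - (t.map (· - γ)).sum
        = γ + ∑ α ∈ F.erase γ, coeff α • (α - γ) := by
          simp only [coeff, sub_smul, Finset.sum_sub_distrib]
          rw [sum_count_smul_sub Finset.subset_union_left,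
            sum_count_smul_sub Finset.subset_union_right, add_sub_assoc]
      _ = γ + ∑ α ∈ m.support, m α • (α - γ) := by
          rw [Finset.sum_congr rfl fun α hα => by rw [← hm hα]]
          rw [Finset.sum_subset hsupp fun α _ hα => by
            rw [Finsupp.notMem_support_iff.1 hα, zero_smul]]
  · calc ∑ α ∈ m.support, max (m α) 0 ≤ ∑ α ∈ m.support, (s.count α : ℤ) :=
          Finset.sum_le_sum fun α hα => by rw [hm (hsupp hα)]; simp only [coeff]; omega
      _ ≤ n := by exact_mod_cast (sum_count_le_card _ s).trans hsn
  · calc ∑ α ∈ m.support, max (-m α) 0 ≤ ∑ α ∈ m.support, (t.count α : ℤ) :=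
          Finset.sum_le_sum fun α hα => by rw [hm (hsupp hα)]; simp only [coeff]; omega
      _ ≤ n := by exact_mod_cast (sum_count_le_card _ t).trans htn

theorem subset_Eext (n : ℕ) (hΓ : Γ ⊆ NN d) : Γ ⊆ Eext n Γ := fun γ hγ => by
  simpa using add_sum_sub_sum_mem_Eext (n := n) hγ (s := 0) (t := 0) (by simp) (by simp) (by simp)
    (by simp) (by simpa using hΓ hγ)

theorem Eext_subset (n : ℕ) (Γ : Set (Fin d → ℤ)) : Eext n Γ ⊆ cosetGen Γ ∩ NN d :=
  fun _ h => h.1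

theorem add_add_sub_sub_mem_Eext {n : ℕ} (hn : 2 ≤ n) {a b g c e : Fin d → ℤ} (ha : a ∈ Γ)
    (hb : b ∈ Γ) (hg : g ∈ Γ) (hc : c ∈ Γ) (he : e ∈ Γ) (hN : a + b + g - c - e ∈ NN d) :
    a + b + g - c - e ∈ Eext n Γ := by
  have key : a + b + g - c - e = g + (({a, b} : Multiset (Fin d → ℤ)).map (· - g)).sum -
      (({c, e} : Multiset (Fin d → ℤ)).map (· - g)).sum := by
    simp only [Multiset.insert_eq_cons, Multiset.map_cons, Multiset.map_singleton,
      Multiset.sum_cons, Multiset.sum_singleton]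
    abel
  rw [key] at hN ⊢
  exact add_sum_sub_sum_mem_Eext hg (by simp [ha, hb]) (by simp [hc, he]) (by simpa) (by simpa) hN

theorem EextIter_subset_NN (n k : ℕ) (Γ : Set (Fin d → ℤ)) : EextIter n k Γ ⊆ NN d := by
  cases k <;> exact (Eext_subset n _).trans Set.inter_subset_right

theorem EextIter_subset_cosetGen (n k : ℕ) (Γ : Set (Fin d → ℤ)) :
    EextIter n k Γ ⊆ cosetGen Γ := by
  induction k with
  | zero => exact (Eext_subset n Γ).trans Set.inter_subset_left
  | succ k ih =>
    exact ((Eext_subset n _).trans Set.inter_subset_left).trans (cosetGen_subset_cosetGen ih)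

theorem EextIter_monotone (n : ℕ) (Γ : Set (Fin d → ℤ)) : Monotone fun k => EextIter n k Γ :=
  monotone_nat_of_le_succ fun k => subset_Eext n (EextIter_subset_NN n k Γ)

theorem EextInf_subset (n : ℕ) (Γ : Set (Fin d → ℤ)) : EextInf n Γ ⊆ cosetGen Γ ∩ NN d :=
  Set.iUnion_subset fun k =>
    Set.subset_inter (EextIter_subset_cosetGen n k Γ) (EextIter_subset_NN n k Γ)

theorem subset_EextInf (n : ℕ) (hΓ : Γ ⊆ NN d) : Γ ⊆ EextInf n Γ :=
  (subset_Eext n hΓ).trans (Set.subset_iUnion (fun k => EextIter n k Γ) 0)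

theorem isTwoClosedIn_EextInf {n : ℕ} (hn : 2 ≤ n) (Γ : Set (Fin d → ℤ)) :
    IsTwoClosedIn (EextInf n Γ) (NN d) where
  subset := (EextInf_subset n Γ).trans Set.inter_subset_right
  add_add_sub_sub_mem a b g c e ha hb hg hc he hN := by
    obtain ⟨k, hk⟩ : ∃ k, (({a, b, g, c, e} : Finset (Fin d → ℤ)) : Set (Fin d → ℤ)) ⊆
        EextIter n k Γ := by
      refine (EextIter_monotone n Γ).directed_le.exists_mem_subset_of_finset_subset_biUnion ?_
      simp only [Finset.coe_insert, Finset.coe_singleton, Set.insert_subset_iff,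
        Set.singleton_subset_iff]
      exact ⟨ha, hb, hg, hc, he⟩
    exact Set.mem_iUnion.2 ⟨k + 1, add_add_sub_sub_mem_Eext hn (hk (by simp)) (hk (by simp))
      (hk (by simp)) (hk (by simp)) (hk (by simp)) hN⟩

theorem latticeConvex_NN (d : ℕ) : LatticeConvex (NN d) := by
  intro A B C D k x y z hA hB hC h hk hx hy hz j
  have hj : k * D j = x * A j + y * B j + z * C j := congrFun h.smul_eq j
  refine nonneg_of_mul_nonneg_right (hj ▸ ?_) hk
  exact add_nonneg (add_nonneg (mul_nonneg hx (hA j)) (mul_nonneg hy (hB j))) (mul_nonneg hz (hC j))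

theorem two_completion_of_dim_two_general {n : ℕ} (hn : 2 ≤ n) (hne : T.Nonempty) (hT : T ⊆ NN d)
    (hdim : HasDim T 2) : EextInf n T = cosetGen T ∩ NN d := by
  obtain ⟨γ, hγ⟩ := hne
  refine (EextInf_subset n T).antisymm fun x ⟨hx, hxN⟩ => ?_
  let S := Submodule.span ℤ ((· - γ) '' T)
  let f : S →+ (Fin d → ℤ) := S.subtype.toAddMonoidHom
  have hclosed := (isTwoClosedIn_EextInf hn T).preimage f γ
  have hconvex := (latticeConvex_NN d).preimage f γ
  have hTE := subset_EextInf n hT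
  have h0 : γ + f 0 ∈ EextInf n T := by rw [map_zero, add_zero]; exact hTE hγ
  have hspan : Submodule.span ℤ ((fun s => γ + f s) ⁻¹' EextInf n T) = ⊤ := by
    rw [eq_top_iff, ← Submodule.span_span_coe_preimage]
    refine Submodule.span_mono ?_
    rintro s ⟨t, ht, hts : t - γ = s⟩
    have hγs : γ + f s = t := (congrArg (γ + ·) hts.symm).trans (add_sub_cancel γ t)
    exact Set.mem_preimage.2 (hγs ▸ hTE ht)
  have hxS : γ + f ⟨x - γ, (mem_cosetGen_iff hγ).1 hx⟩ = x := add_sub_cancel γ x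
  exact hxS ▸ hclosed.superset_of_span_eq_top (hdim γ hγ) hconvex h0 hspan
    (Set.mem_preimage.2 (hxS.symm ▸ hxN))

/-- For `d ≥ 3` and `T ⊆ ℕ₀^d` with `dim T = 2`, the `2`-completion of `T`
is `Λ(T) ∩ ℕ₀^d`. -/
theorem two_completion_of_dim_two (d : ℕ) (hd : 3 ≤ d) (T : Set (Fin d → ℤ))
    (hne : T.Nonempty) (hT : T ⊆ NN d) (hdim : HasDim T 2) :
    EextInf 2 T = cosetGen T ∩ NN d :=
  two_completion_of_dim_two_general le_rfl hne hT hdim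

end
end

section
/- Let Γ := {(3,0,0), (0,3,0), (1,1,1)} ⊆ ℕ_0^3. Then E_1(Γ) = Γ, while E_2(Γ) = Λ(Γ) ∩ ℕ_0^3 = Γ ∪ {(0,0,3)}. -/
open MeasureTheory
open scoped Classical ENNReal

noncomputable section

/-!
The coordinate sum and the residue of `x 0 - x 1` modulo `3` are constant on `Γ`, hence on `Λ(Γ)`;
only four points of `ℕ₀³` share these invariants with `Γ`, the new one being `(0,0,3)`.
It is reached from `(1,1,1)` by subtracting both differences `(3,0,0) - (1,1,1)` and
`(0,3,0) - (1,1,1)`, so it lies in `E_2(Γ)`. If an additive function takes values in `[a, b]`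
on `Γ`, then it is at most `b + n (b - a)` on `E_n(Γ)`; for the third coordinate, where
`[a, b] = [0, 1]`, this gives the bound `2` on `E_1(Γ)`, which `(0,0,3)` violates.
-/

section Extension

variable {d n : ℕ} {Γ : Set (Fin d → ℤ)} {γ x : Fin d → ℤ}

lemma map_eq_of_mem_cosetGen {A : Type*} [AddGroup A] (φ : (Fin d → ℤ) →+ A) {c : A}
    (hφ : ∀ γ ∈ Γ, φ γ = c) (hx : x ∈ cosetGen Γ) : φ x = c := by
  simp only [cosetGen, Set.mem_iUnion] at hx
  obtain ⟨γ, hγ, v, hv, rfl⟩ := hx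
  have closure_le_ker : AddSubgroup.closure ((· - γ) '' Γ) ≤ φ.ker := by
    rw [AddSubgroup.closure_le]
    rintro _ ⟨α, hα, rfl⟩
    simp [AddMonoidHom.mem_ker, hφ α hα, hφ γ hγ]
  simp [hφ γ hγ, AddMonoidHom.mem_ker.mp (closure_le_ker hv)]

lemma add_sum_zsmul_sub_mem_cosetGen {s : Finset (Fin d → ℤ)} (c : (Fin d → ℤ) → ℤ)
    (hγ : γ ∈ Γ) (hs : ↑s ⊆ Γ) : γ + ∑ α ∈ s, c α • (α - γ) ∈ cosetGen Γ := by
  simp only [cosetGen, Set.mem_iUnion]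
  exact ⟨γ, hγ, _, sum_mem fun α hα ↦
    zsmul_mem (AddSubgroup.subset_closure (Set.mem_image_of_mem _ (hs hα))) _, rfl⟩

lemma add_sum_zsmul_sub_mem_Eext {s : Finset (Fin d → ℤ)} (c : (Fin d → ℤ) → ℤ)
    (hγ : γ ∈ Γ) (hs : ↑s ⊆ Γ \ {γ}) (hpos : ∑ α ∈ s, max (c α) 0 ≤ n)
    (hneg : ∑ α ∈ s, max (-c α) 0 ≤ n) (hNN : γ + ∑ α ∈ s, c α • (α - γ) ∈ NN d) :
    γ + ∑ α ∈ s, c α • (α - γ) ∈ Eext n Γ := by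
  let m : (Fin d → ℤ) →₀ ℤ := Finsupp.indicator s fun α _ ↦ c α
  have sum_eq {M : Type} [AddCommMonoid M] (f : (Fin d → ℤ) → ℤ → M) (hf : ∀ α, f α 0 = 0) :
      ∑ α ∈ m.support, f α (m α) = ∑ α ∈ s, f α (c α) :=
    Finsupp.sum_indicator_index c fun α _ ↦ hf α
  refine ⟨⟨add_sum_zsmul_sub_mem_cosetGen c hγ (hs.trans Set.sdiff_subset), hNN⟩, γ, hγ, m,
    (Finset.coe_subset.mpr (Finsupp.support_indicator_subset s _)).trans hs, ?_, ?_, ?_⟩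
  · rw [sum_eq (fun α k ↦ k • (α - γ)) (by simp)]
  · rwa [sum_eq (fun _ k ↦ max k 0) (by simp)]
  · rwa [sum_eq (fun _ k ↦ max (-k) 0) (by simp)]

lemma inter_NN_subset_Eext : Γ ∩ NN d ⊆ Eext n Γ := fun γ ⟨hγ, hNN⟩ ↦ by
  simpa using add_sum_zsmul_sub_mem_Eext (s := ∅) (n := n) 0 hγ (by simp) (by simp) (by simp)
    (by simpa using hNN)

section Ordered

variable {G : Type*} [AddCommGroup G] [PartialOrder G] [IsOrderedAddMonoid G]

lemma zsmul_le_max_zsmul_add_max_neg_zsmul {a b g : G} (k : ℤ) (ha : -a ≤ g) (hb : g ≤ b) :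
    k • g ≤ max k 0 • b + max (-k) 0 • a := calc
  k • g = max k 0 • g + max (-k) 0 • -g := by
    rw [smul_neg, ← sub_eq_add_neg, ← sub_smul, max_zero_sub_max_neg_zero_eq_self]
  _ ≤ max k 0 • b + max (-k) 0 • a :=
    add_le_add (zsmul_le_zsmul_right (le_max_right k 0) hb)
      (zsmul_le_zsmul_right (le_max_right (-k) 0) (neg_le.mp ha))

lemma map_le_of_mem_Eext (φ : (Fin d → ℤ) →+ G) {a b : G} (hφ : Set.MapsTo φ Γ (Set.Icc a b))
    (hx : x ∈ Eext n Γ) : φ x ≤ b + n • (b - a) := by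
  obtain ⟨-, γ, hγ, m, hm, rfl, hpos, hneg⟩ := hx
  obtain ⟨haγ, hγb⟩ := hφ hγ
  have term_le : ∀ α ∈ m.support, m α • (φ α - φ γ) ≤
      max (m α) 0 • (b - φ γ) + max (-m α) 0 • (φ γ - a) := fun α hα ↦ by
    obtain ⟨haα, hαb⟩ := hφ (hm hα).1
    apply zsmul_le_max_zsmul_add_max_neg_zsmul
    · rw [neg_sub]
      exact sub_le_sub_right haα _
    · exact sub_le_sub_right hαb _
  calc φ (γ + ∑ α ∈ m.support, m α • (α - γ))
      = φ γ + ∑ α ∈ m.support, m α • (φ α - φ γ) := by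
        simp only [map_add, map_sum, map_zsmul, map_sub]
    _ ≤ φ γ + ((∑ α ∈ m.support, max (m α) 0) • (b - φ γ) +
          (∑ α ∈ m.support, max (-m α) 0) • (φ γ - a)) := by
        rw [Finset.sum_smul, Finset.sum_smul, ← Finset.sum_add_distrib]
        gcongr with α hα
        exact term_le α hα
    _ ≤ φ γ + ((n : ℤ) • (b - φ γ) + (n : ℤ) • (φ γ - a)) := by gcongr
    _ = φ γ + n • (b - a) := by rw [← smul_add, sub_add_sub_cancel, natCast_zsmul]
    _ ≤ b + n • (b - a) := by gcongr

end Ordered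

end Extension

/-- The set `Γ` of the example: the exponents of the monomials `z₁³`, `z₂³` and `z₁z₂z₃`. -/
abbrev exampleSet : Set (Fin 3 → ℤ) := {![3,0,0], ![0,3,0], ![1,1,1]}

lemma exampleSet_subset_NN : exampleSet ⊆ NN 3 := by
  rintro γ (rfl | rfl | rfl) <;> simp [NN, Fin.forall_fin_succ]

lemma sum_eq_three_of_mem_cosetGen_exampleSet {x : Fin 3 → ℤ} (hx : x ∈ cosetGen exampleSet) :
    x 0 + x 1 + x 2 = 3 := by
  let total : (Fin 3 → ℤ) →+ ℤ := ∑ i, Pi.evalAddMonoidHom (fun _ ↦ ℤ) i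
  have total_apply (y : Fin 3 → ℤ) : total y = y 0 + y 1 + y 2 := by
    simp [total, Fin.sum_univ_three]
  rw [← total_apply]
  refine map_eq_of_mem_cosetGen total ?_ hx
  rintro γ (rfl | rfl | rfl) <;> simp [total_apply]

lemma modEq_three_of_mem_cosetGen_exampleSet {x : Fin 3 → ℤ} (hx : x ∈ cosetGen exampleSet) :
    x 0 ≡ x 1 [ZMOD 3] := by
  let residue : (Fin 3 → ℤ) →+ ZMod 3 :=
    (Int.castAddHom (ZMod 3)).comp (Pi.evalAddMonoidHom (fun _ ↦ ℤ) 0 - Pi.evalAddMonoidHom _ 1)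
  have residue_apply (y : Fin 3 → ℤ) : residue y = (y 0 : ZMod 3) - y 1 := by simp [residue]
  apply (ZMod.intCast_eq_intCast_iff (x 0) (x 1) 3).mp
  rw [← sub_eq_zero, ← residue_apply]
  refine map_eq_of_mem_cosetGen residue ?_ hx
  rintro γ (rfl | rfl | rfl) <;> rw [residue_apply] <;> decide

lemma cosetGen_exampleSet_inter_NN_subset :
    cosetGen exampleSet ∩ NN 3 ⊆ {![3,0,0], ![0,3,0], ![1,1,1], ![0,0,3]} := by
  rintro x ⟨hx, hNN⟩
  have hsum := sum_eq_three_of_mem_cosetGen_exampleSet hx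
  have hmod := modEq_three_of_mem_cosetGen_exampleSet hx
  have h0 := hNN 0
  have h1 := hNN 1
  have h2 := hNN 2
  have hcoords : x 0 = 3 ∧ x 1 = 0 ∧ x 2 = 0 ∨ x 0 = 0 ∧ x 1 = 3 ∧ x 2 = 0 ∨
      x 0 = 1 ∧ x 1 = 1 ∧ x 2 = 1 ∨ x 0 = 0 ∧ x 1 = 0 ∧ x 2 = 3 := by
    rw [Int.ModEq] at hmod
    lia
  simpa [funext_iff, Fin.forall_fin_succ] using hcoords

lemma notMem_Eext_one_exampleSet : ![0,0,3] ∉ Eext 1 exampleSet := fun h ↦ by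
  have hcoord : Set.MapsTo (Pi.evalAddMonoidHom (fun _ ↦ ℤ) 2) exampleSet
      (Set.Icc 0 1) := by
    rintro γ (rfl | rfl | rfl) <;> simp
  have : (3 : ℤ) ≤ 1 + 1 • (1 - 0) := map_le_of_mem_Eext _ hcoord h
  norm_num at this

lemma mem_Eext_two_exampleSet : ![0,0,3] ∈ Eext 2 exampleSet := by
  let s : Finset (Fin 3 → ℤ) := {![3,0,0], ![0,3,0]}
  have point_eq : (![0,0,3] : Fin 3 → ℤ) = ![1,1,1] + ∑ α ∈ s, (-1 : ℤ) • (α - ![1,1,1]) := by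
    decide
  rw [point_eq]
  refine add_sum_zsmul_sub_mem_Eext _ (by simp) ?_ (by simp) (by decide) ?_
  · simp [s, Set.insert_subset_iff]
  · rw [← point_eq]
    simp [NN, Fin.forall_fin_succ]

/-- Example: for `Γ = {(3,0,0), (0,3,0), (1,1,1)}` one has `E_1(Γ) = Γ` while
`E_2(Γ) = Λ(Γ) ∩ ℕ₀³ = Γ ∪ {(0,0,3)}`. -/
theorem example_dimension_three :
    Eext 1 ({![3,0,0], ![0,3,0], ![1,1,1]} : Set (Fin 3 → ℤ))
      = ({![3,0,0], ![0,3,0], ![1,1,1]} : Set (Fin 3 → ℤ)) ∧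
    Eext 2 ({![3,0,0], ![0,3,0], ![1,1,1]} : Set (Fin 3 → ℤ))
      = cosetGen ({![3,0,0], ![0,3,0], ![1,1,1]} : Set (Fin 3 → ℤ)) ∩ NN 3 ∧
    Eext 2 ({![3,0,0], ![0,3,0], ![1,1,1]} : Set (Fin 3 → ℤ))
      = ({![3,0,0], ![0,3,0], ![1,1,1], ![0,0,3]} : Set (Fin 3 → ℤ)) := by
  have base_subset (n : ℕ) : exampleSet ⊆ Eext n exampleSet := fun γ hγ ↦
    inter_NN_subset_Eext ⟨hγ, exampleSet_subset_NN hγ⟩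
  have four_subset : {![3,0,0], ![0,3,0], ![1,1,1], ![0,0,3]} ⊆ Eext 2 exampleSet := by
    rintro x (rfl | rfl | rfl | rfl)
    iterate 3 exact base_subset 2 (by simp)
    exact mem_Eext_two_exampleSet
  have Eext_subset (n : ℕ) : Eext n exampleSet ⊆ cosetGen exampleSet ∩ NN 3 := fun _ hx ↦ hx.1
  have coset_subset := cosetGen_exampleSet_inter_NN_subset
  refine ⟨Set.Subset.antisymm ?_ (base_subset 1),
    (Eext_subset 2).antisymm (coset_subset.trans four_subset),
    ((Eext_subset 2).trans coset_subset).antisymm four_subset⟩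
  intro x hx
  rcases coset_subset (Eext_subset 1 hx) with rfl | rfl | rfl | rfl
  iterate 3 simp
  exact absurd hx notMem_Eext_one_exampleSet

end
end
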